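/- Let A be an n×n dual quaternion Hermitian matrix with eigenvalues λ₁,…,λ_n. Then Cdet(A) = λ₁ λ₂ ⋯ λ_n, and Cdet(A*A) = Cdet(A)² = λ₁² λ₂² ⋯ λ_n². -/

import Mathlib

/-!
The Chen determinant of a Hermitian dual quaternion matrix is a polynomial in the traces of its
powers, and these are invariant under unitary conjugation.

*Real parts.* Inverting one cycle of a permutation conjugates the corresponding cycle word of a
Hermitian matrix and changes nothing else. Averaging over these inversions replaces each cycle
word by its real part, a central dual number that does not depend on the base point of the cycle
(`sum_chenFactor`, `Cdet_eq_wsum`). With the sign `(-1) ^ (n - r)` distributed over the `r`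
cycles, `Cdet B = (-1) ^ n * W(B)`, where `W(B) = ∑_σ ∏_{cycles c of σ} (-Re B_c)` (`wsum`).

*Repeated rows.* If rows `i ≠ j` of `B` agree then `W(B) = 0` (`wsum_eq_zero`). The map
`σ ↦ σ * swap i j` pairs the permutations separating `i` and `j` (cycle words `x`, `y`) with
those joining them (cycle word `yx`). Averaging over inversion of the cycle of `j` turns
`Re(yx)` into `(Re(yx) + Re(y*x)) / 2 = Re x * Re y`, which cancels the contribution
`(-Re x) * (-Re y)` of the separated permutation.

*Traces.* Consequently `∑_f W(A.submatrix f f)` over all `f : Fin n → Fin n` equals `n! * W(A)`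
(`sum_wsum_submatrix`). Interchanging the sums over `f` and `σ`, it is also
`∑_σ ∏_c (-Re tr (A ^ |c|))` (`sum_term_submatrix`). Hence `W(A)` depends only on the numbers
`Re tr (A ^ m)` (`wsum_eq_of_trace`). These agree for `A` and for the diagonal matrix
`U * A * Uᴴ`, whose `W` is `(-1) ^ n` times the product of the eigenvalues. The claim about
`Aᴴ * A = A * A` is the same result for the eigenvalues `λ_i ^ 2`.
-/

/-!
Formalization background for "Moore Determinant of Dual Quaternion Hermitian Matrices"
(Cui, Qi, Song, Wang).

A dual quaternion is `q = q_s + q_d ε` with `q_s, q_d` quaternions, `ε² = 0`; it is modeled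
by `DualNumber (Quaternion ℝ)`.
-/

open Quaternion Matrix

noncomputable section

/-- Dual quaternions: dual numbers over the quaternions. -/
abbrev DualQuaternion : Type := DualNumber (Quaternion ℝ)

namespace DQPaper

/-- Conjugation of dual quaternions: `(q_s + q_d ε)* = q_s* + q_d* ε`. -/
instance : Star DualQuaternion := ⟨fun q => (star q.fst, star q.snd)⟩

/-- The real part of a dual quaternion `q = q_s + q_d ε`, as the dual number
`Re(q_s) + Re(q_d) ε`. -/
def dqRe (q : DualQuaternion) : DualNumber ℝ := (q.fst.re, q.snd.re)

/-- The embedding of the dual numbers into the dual quaternions. -/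
def toDQ (d : DualNumber ℝ) : DualQuaternion := ((d.fst : ℍ[ℝ]), (d.snd : ℍ[ℝ]))

/-- A dual quaternion is a dual number if its standard and dual parts are both real. -/
def IsDualNum (q : DualQuaternion) : Prop := ∃ d : DualNumber ℝ, q = toDQ d

/-- A dual number `a + b ε` is nonnegative if `a > 0`, or `a = 0` and `b ≥ 0`. -/
def DNNonneg (u : DualNumber ℝ) : Prop := 0 < u.fst ∨ (u.fst = 0 ∧ 0 ≤ u.snd)

/-- The order on dual numbers: `u ≤ v` iff `v - u` is nonnegative. -/
def dnLe (u v : DualNumber ℝ) : Prop := DNNonneg (v - u)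

open Classical in
/-- The magnitude of a dual quaternion `p = p_s + p_d ε`, as a dual number:
`|p| = |p_s| + ((p_s* p_d + p_d* p_s)/(2|p_s|)) ε` if `p_s ≠ 0`, and `|p| = |p_d| ε`
otherwise. -/
def dqMag (p : DualQuaternion) : DualNumber ℝ :=
  if p.fst = 0 then (0, ‖p.snd‖)
  else (‖p.fst‖, ((star p.fst * p.snd + star p.snd * p.fst).re) / (2 * ‖p.fst‖))

/-- The cycle of the permutation `σ` containing `i`, listed as `[i, σ i, σ² i, …]`. -/
def cycleList {n : ℕ} (σ : Equiv.Perm (Fin n)) (i : Fin n) : List (Fin n) :=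
  i :: (((List.range n).map (fun k => (σ ^ (k + 1)) i)).takeWhile (fun j => decide (j ≠ i)))

/-- The leaders (largest element of each cycle) of `σ`, listed in decreasing order;
this is the normalization used in the Chen determinant. -/
def chenLeaders {n : ℕ} (σ : Equiv.Perm (Fin n)) : List (Fin n) :=
  ((List.finRange n).filter (fun i => (cycleList σ i).all (fun j => decide (j ≤ i)))).reverse

/-- All of `Fin n` listed in the normalized cycle order of the Chen determinant:
each cycle is led by its largest element, and cycles are ordered by decreasing leaders
(so the first cycle contains the last index). -/
def chenOrder {n : ℕ} (σ : Equiv.Perm (Fin n)) : List (Fin n) :=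
  ((chenLeaders σ).map (cycleList σ)).flatten

/-- The Chen determinant of a square matrix over a (possibly noncommutative) ring:
`Cdet A = Σ_σ (−1)^{n−r} a_σ`, where `σ` runs over all permutations written in the
normalized cycle form with `r` disjoint cycles, and `a_σ` is the ordered product of the
entries `A i (σ i)` along the normalized cycle order. -/
def Cdet {n : ℕ} {R : Type*} [Ring R] (A : Matrix (Fin n) (Fin n) R) : R :=
  ∑ σ : Equiv.Perm (Fin n),
    (-1 : R) ^ (n - (chenLeaders σ).length) * ((chenOrder σ).map (fun i => A i (σ i))).prod

/-- The leaders (smallest element of each cycle) of `σ`, listed in decreasing order;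
this is the normalization used in the Moore determinant. -/
def mooreLeaders {n : ℕ} (σ : Equiv.Perm (Fin n)) : List (Fin n) :=
  ((List.finRange n).filter (fun i => (cycleList σ i).all (fun j => decide (i ≤ j)))).reverse

/-- All of `Fin n` listed in the normalized cycle order of the Moore determinant:
each cycle is led by its smallest element, and cycles are ordered by decreasing leaders. -/
def mooreOrder {n : ℕ} (σ : Equiv.Perm (Fin n)) : List (Fin n) :=
  ((mooreLeaders σ).map (cycleList σ)).flatten

/-- The Moore determinant of a square matrix over a (possibly noncommutative) ring:
`Mdet A = Σ_σ s(σ) a_σ`, where `s(σ)` is the sign of `σ` and `a_σ` is the ordered product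
of the entries `A i (σ i)` along the normalized (Moore) cycle order. -/
def Mdet {n : ℕ} {R : Type*} [Ring R] (A : Matrix (Fin n) (Fin n) R) : R :=
  ∑ σ : Equiv.Perm (Fin n),
    ((Equiv.Perm.sign σ : ℤ) : R) * ((mooreOrder σ).map (fun i => A i (σ i))).prod

/-- The switching matrix `P_{ij}`: the identity matrix with rows `i` and `j` interchanged. -/
def switchMatrix {R : Type*} [Ring R] {n : ℕ} (i j : Fin n) : Matrix (Fin n) (Fin n) R :=
  Matrix.of fun k l =>
    if (k = i ∧ l = j) ∨ (k = j ∧ l = i) ∨ (k = l ∧ k ≠ i ∧ k ≠ j) then 1 else 0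

/-- The multiplication matrix `P_{i;c}`: the identity matrix with the `(i,i)` entry
replaced by `c`. -/
def mulMatrix {R : Type*} [Ring R] {n : ℕ} (i : Fin n) (c : R) : Matrix (Fin n) (Fin n) R :=
  Matrix.of fun k l => if k = l then (if k = i then c else 1) else 0

/-- The addition matrix `P_{ij;c}`: the identity matrix with an extra entry `c` in
position `(j,i)`, so that `P_{ij;c} * A` adds `c` times row `i` of `A` to row `j`. -/
def addMatrix {R : Type*} [Ring R] {n : ℕ} (i j : Fin n) (c : R) : Matrix (Fin n) (Fin n) R :=
  Matrix.of fun k l => (if k = l then 1 else 0) + (if k = j ∧ l = i then c else 0)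

/-- The product `A i₁ i₂ * A i₂ i₃ * ⋯ * A i_{m-1} i_m` of matrix entries along a chain of
indices `[i₁, …, i_m]`; applied to a closed chain `[i₁, …, i_m, i₁]` it gives the cycle
product `⟨i₁ … i_m i₁⟩ = a_{i₁ i₂} ⋯ a_{i_m i₁}`. -/
def chainProd {n : ℕ} (A : Matrix (Fin n) (Fin n) DualQuaternion) :
    List (Fin n) → DualQuaternion
  | [] => 1
  | [_] => 1
  | i :: j :: rest => A i j * chainProd A (j :: rest)

/-- A dual number `lam` is a (right) eigenvalue of the dual quaternion matrix `A` if
`A x = x lam` for some appreciable dual quaternion vector `x` (i.e. one whose standard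
part is nonzero). -/
def IsEigenvalue {n : ℕ} (A : Matrix (Fin n) (Fin n) DualQuaternion)
    (lam : DualNumber ℝ) : Prop :=
  ∃ x : Fin n → DualQuaternion,
    (fun i => (x i).fst) ≠ 0 ∧ A.mulVec x = fun i => x i * toDQ lam

/-- The dual quaternion Hermitian matrix `A` has the dual numbers `lam 1, …, lam n` as its
eigenvalues (counted with multiplicity), via the unitary diagonalization `U A U* = diag(lam)`
of Qi and Luo (2023). -/
def HasEigenvalues {n : ℕ} (A : Matrix (Fin n) (Fin n) DualQuaternion)
    (lam : Fin n → DualNumber ℝ) : Prop :=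
  ∃ U : Matrix (Fin n) (Fin n) DualQuaternion,
    Uᴴ * U = 1 ∧ U * A * Uᴴ = Matrix.diagonal fun i => toDQ (lam i)

/-! ### Algebra of dual quaternions -/

theorem dq_star_fst (x : DualQuaternion) : (star x).fst = star x.fst := rfl

theorem dq_star_snd (x : DualQuaternion) : (star x).snd = star x.snd := rfl

theorem toDQ_fst (d : DualNumber ℝ) : (toDQ d).fst = (d.fst : ℍ[ℝ]) := rfl

theorem toDQ_snd (d : DualNumber ℝ) : (toDQ d).snd = (d.snd : ℍ[ℝ]) := rfl

theorem dqRe_fst (x : DualQuaternion) : (dqRe x).fst = x.fst.re := rfl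

theorem dqRe_snd (x : DualQuaternion) : (dqRe x).snd = x.snd.re := rfl

theorem dq_star_star (x : DualQuaternion) : star (star x) = x := by
  apply TrivSqZeroExt.ext <;> simp [dq_star_fst, dq_star_snd]

theorem dq_star_mul (x y : DualQuaternion) : star (x * y) = star y * star x := by
  apply TrivSqZeroExt.ext <;> simp [dq_star_fst, dq_star_snd, add_comm]

theorem dq_star_add (x y : DualQuaternion) : star (x + y) = star x + star y := by
  apply TrivSqZeroExt.ext <;> simp [dq_star_fst, dq_star_snd]

/-- The dual quaternions form a star ring under the given conjugation. -/
instance dqStarRing : StarRing DualQuaternion where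
  star_involutive := dq_star_star
  star_mul := dq_star_mul
  star_add := dq_star_add

/-- `toDQ` as a ring homomorphism. -/
def toDQHom : DualNumber ℝ →+* DualQuaternion where
  toFun := toDQ
  map_one' := by apply TrivSqZeroExt.ext <;> simp [toDQ_fst, toDQ_snd]
  map_zero' := by apply TrivSqZeroExt.ext <;> simp [toDQ_fst, toDQ_snd]
  map_add' x y := by apply TrivSqZeroExt.ext <;> simp [toDQ_fst, toDQ_snd]
  map_mul' x y := by apply TrivSqZeroExt.ext <;> simp [toDQ_fst, toDQ_snd]

theorem toDQHom_apply (d : DualNumber ℝ) : toDQHom d = toDQ d := rfl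

theorem star_toDQ (d : DualNumber ℝ) : star (toDQ d) = toDQ d := by
  apply TrivSqZeroExt.ext <;> simp [dq_star_fst, dq_star_snd, toDQ_fst, toDQ_snd]

theorem toDQ_comm (d : DualNumber ℝ) (x : DualQuaternion) : toDQ d * x = x * toDQ d := by
  apply TrivSqZeroExt.ext
  · simp [toDQ_fst, Quaternion.coe_commutes]
  · simp [toDQ_fst, toDQ_snd, Quaternion.coe_commutes, add_comm]

/-- `dqRe` as an additive homomorphism. -/
def dqReHom : DualQuaternion →+ DualNumber ℝ where
  toFun := dqRe
  map_zero' := by apply TrivSqZeroExt.ext <;> simp [dqRe_fst, dqRe_snd]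
  map_add' x y := by apply TrivSqZeroExt.ext <;> simp [dqRe_fst, dqRe_snd]

theorem dqReHom_apply (x : DualQuaternion) : dqReHom x = dqRe x := rfl

theorem dqRe_toDQ (d : DualNumber ℝ) : dqRe (toDQ d) = d := by
  apply TrivSqZeroExt.ext <;> simp [dqRe_fst, dqRe_snd, toDQ_fst, toDQ_snd]

theorem dqRe_star (x : DualQuaternion) : dqRe (star x) = dqRe x := by
  apply TrivSqZeroExt.ext <;> simp [dqRe_fst, dqRe_snd, dq_star_fst, dq_star_snd]

theorem dqRe_mul_comm (x y : DualQuaternion) : dqRe (x * y) = dqRe (y * x) := by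
  apply TrivSqZeroExt.ext
  · simp [dqRe_fst]; ring
  · simp [dqRe_snd]; ring

theorem add_star_eq (x : DualQuaternion) : x + star x = toDQ (dqRe x) + toDQ (dqRe x) := by
  apply TrivSqZeroExt.ext <;>
    ext <;> simp [dqRe_fst, dqRe_snd, dq_star_fst, dq_star_snd, toDQ_fst, toDQ_snd]

/-- `Re(xy) + Re(x*y) = 2 Re(x) Re(y)`. -/
theorem dqRe_mul_add_dqRe_star_mul (x y : DualQuaternion) :
    dqRe (x * y) + dqRe (star x * y) = dqRe x * dqRe y + dqRe x * dqRe y := by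
  apply TrivSqZeroExt.ext
  · simp [dqRe_fst, dq_star_fst]
  · simp [dqRe_fst, dqRe_snd, dq_star_fst, dq_star_snd]; ring

theorem dq_add_self_cancel {x y : DualQuaternion} (h : x + x = y + y) : x = y := by
  have : (2 : ℝ) • x = (2 : ℝ) • y := by simpa [two_smul] using h
  exact smul_right_injective _ (two_ne_zero) this

theorem dn_add_self_eq_zero {x : DualNumber ℝ} (h : x + x = 0) : x = 0 := by
  have : (2 : ℝ) • x = 0 := by simpa [two_smul] using h
  exact (smul_eq_zero.mp this).resolve_left two_ne_zero

/-! ### Cycles of a permutation and words along them -/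

section Cycles

variable {n : ℕ}

/-- The word `B i (σ i) * B (σ i) (σ² i) * ⋯` of length `m` read along the orbit of `i`. -/
def path (B : Matrix (Fin n) (Fin n) DualQuaternion) (σ : Equiv.Perm (Fin n)) :
    ℕ → Fin n → DualQuaternion
  | 0, _ => 1
  | m + 1, i => B i (σ i) * path B σ m (σ i)

/-- The length of the cycle of `σ` through `i`. -/
def per (σ : Equiv.Perm (Fin n)) (i : Fin n) : ℕ := Function.minimalPeriod σ i

/-- The cycle word of `σ` based at `i`. -/
def cyc (B : Matrix (Fin n) (Fin n) DualQuaternion) (σ : Equiv.Perm (Fin n)) (i : Fin n) :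
    DualQuaternion := path B σ (per σ i) i

theorem path_add (B : Matrix (Fin n) (Fin n) DualQuaternion) (σ : Equiv.Perm (Fin n))
    (a b : ℕ) (i : Fin n) : path B σ (a + b) i = path B σ a i * path B σ b (σ^[a] i) := by
  induction a generalizing i with
  | zero => simp [path]
  | succ a ih => rw [Nat.succ_add, path, path, ih, mul_assoc]; rfl

theorem per_pos (σ : Equiv.Perm (Fin n)) (i : Fin n) : 0 < per σ i := by
  apply Function.minimalPeriod_pos_of_mem_periodicPts
  exact σ.injective.mem_periodicPts i

theorem iterate_per (σ : Equiv.Perm (Fin n)) (i : Fin n) : σ^[per σ i] i = i :=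
  Function.iterate_minimalPeriod

theorem iterate_ne_of_lt_per {σ : Equiv.Perm (Fin n)} {i : Fin n} {m : ℕ} (h0 : 0 < m)
    (h : m < per σ i) : σ^[m] i ≠ i :=
  Function.not_isPeriodicPt_of_pos_of_lt_minimalPeriod h0.ne' h

theorem sameCycle_iterate (σ : Equiv.Perm (Fin n)) (i : Fin n) (m : ℕ) :
    σ.SameCycle i (σ^[m] i) :=
  ⟨m, by simp [Equiv.Perm.iterate_eq_pow]⟩

theorem sameCycle_iff (σ : Equiv.Perm (Fin n)) (i j : Fin n) :
    σ.SameCycle i j ↔ ∃ m < per σ i, σ^[m] i = j := by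
  constructor
  · intro h
    obtain ⟨m, -, hm⟩ := h.exists_pow_eq'
    refine ⟨m % per σ i, Nat.mod_lt _ (per_pos σ i), ?_⟩
    rw [per, Function.iterate_mod_minimalPeriod_eq, Equiv.Perm.iterate_eq_pow, hm]
  · rintro ⟨m, -, rfl⟩
    exact sameCycle_iterate σ i m

theorem iterate_injOn_per {σ : Equiv.Perm (Fin n)} {i : Fin n} {a b : ℕ} (ha : a < per σ i)
    (hb : b < per σ i) (h : σ^[a] i = σ^[b] i) : a = b :=
  Function.iterate_injOn_Iio_minimalPeriod ha hb h

theorem per_apply (σ : Equiv.Perm (Fin n)) (i : Fin n) : per σ (σ i) = per σ i :=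
  Function.minimalPeriod_apply (σ.injective.mem_periodicPts i)

/-- By cyclicity of the real part, the real part of a cycle word does not depend on the
base point. -/
theorem dqRe_cyc_apply (B : Matrix (Fin n) (Fin n) DualQuaternion) (σ : Equiv.Perm (Fin n))
    (i : Fin n) : dqRe (cyc B σ (σ i)) = dqRe (cyc B σ i) := by
  obtain ⟨m, hm⟩ := Nat.exists_eq_succ_of_ne_zero (per_pos σ i).ne'
  have h := iterate_per σ i
  unfold cyc
  rw [per_apply, hm]
  rw [hm, Function.iterate_succ_apply] at h
  conv_lhs => rw [Nat.succ_eq_add_one, path_add, h]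
  rw [path, dqRe_mul_comm]
  simp [path]

theorem dqRe_cyc_congr (B : Matrix (Fin n) (Fin n) DualQuaternion) {σ : Equiv.Perm (Fin n)}
    {i j : Fin n} (h : σ.SameCycle i j) : dqRe (cyc B σ j) = dqRe (cyc B σ i) := by
  obtain ⟨m, -, rfl⟩ := (sameCycle_iff σ i j).1 h
  induction m with
  | zero => rfl
  | succ m ih =>
    rw [Function.iterate_succ_apply', dqRe_cyc_apply]
    exact ih (sameCycle_iterate σ i m)

/-- If `τ` agrees with `σ` along the first `m` steps from `i`, the orbits and words agree. -/
theorem iterate_path_congr (B : Matrix (Fin n) (Fin n) DualQuaternion)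
    {σ τ : Equiv.Perm (Fin n)} {i : Fin n} {m : ℕ}
    (h : ∀ t < m, τ (σ^[t] i) = σ (σ^[t] i)) :
    τ^[m] i = σ^[m] i ∧ path B τ m i = path B σ m i := by
  induction m generalizing i with
  | zero => simp [path]
  | succ m ih =>
    have h0 : τ i = σ i := h 0 (by omega)
    have := @ih (σ i) (fun t ht => h (t + 1) (by omega))
    simp only [Function.iterate_succ_apply, path, h0, this, and_self]

/-! ### Transversals of the cycles -/

/-- `S` contains exactly one element of each cycle of `σ`. -/
def IsTransv (σ : Equiv.Perm (Fin n)) (S : Finset (Fin n)) : Prop :=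
  (∀ k, ∃ s ∈ S, σ.SameCycle s k) ∧ ∀ s ∈ S, ∀ t ∈ S, σ.SameCycle s t → s = t

open Classical in
/-- The largest elements of the cycles of `σ`. -/
def leads (σ : Equiv.Perm (Fin n)) : Finset (Fin n) :=
  Finset.univ.filter fun i => ∀ j, σ.SameCycle i j → j ≤ i

theorem mem_leads {σ : Equiv.Perm (Fin n)} {i : Fin n} :
    i ∈ leads σ ↔ ∀ j, σ.SameCycle i j → j ≤ i := by
  simp [leads]

theorem isTransv_leads (σ : Equiv.Perm (Fin n)) : IsTransv σ (leads σ) := by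
  classical
  constructor
  · intro k
    obtain ⟨s, hs, hmax⟩ := (Finset.univ.filter (fun j => σ.SameCycle k j)).exists_max_image id
      ⟨k, by simp [Equiv.Perm.SameCycle.refl]⟩
    simp only [Finset.mem_filter, Finset.mem_univ, true_and, id] at hs hmax
    exact ⟨s, mem_leads.2 fun j hj => hmax j (hs.trans hj), hs.symm⟩
  · intro s hs t ht h
    exact le_antisymm (mem_leads.1 ht s h.symm) (mem_leads.1 hs t h)

theorem prod_transv {σ : Equiv.Perm (Fin n)} {S S' : Finset (Fin n)} (hS : IsTransv σ S)
    (hS' : IsTransv σ S') {φ : Fin n → DualNumber ℝ}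
    (hφ : ∀ i j, σ.SameCycle i j → φ i = φ j) : ∏ s ∈ S, φ s = ∏ s ∈ S', φ s := by
  choose r hr hrs using hS'.1
  refine Finset.prod_bij (fun s _ => r s) (fun s _ => hr s) ?_ ?_ ?_
  · intro s hs t ht h
    exact hS.2 s hs t ht ((hrs s).symm.trans (h ▸ hrs t))
  · intro t ht
    obtain ⟨s, hs, hst⟩ := hS.1 t
    exact ⟨s, hs, hS'.2 _ (hr s) _ ht ((hrs s).trans hst)⟩
  · intro s _
    exact (hφ _ _ (hrs s)).symm

/-- The product, over the cycles of `σ`, of minus the real part of the cycle word. The signs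
make up `(-1) ^ r` with `r` the number of cycles. -/
def term (B : Matrix (Fin n) (Fin n) DualQuaternion) (σ : Equiv.Perm (Fin n)) :
    DualNumber ℝ := ∏ s ∈ leads σ, -dqRe (cyc B σ s)

theorem term_eq (B : Matrix (Fin n) (Fin n) DualQuaternion) {σ : Equiv.Perm (Fin n)}
    {S : Finset (Fin n)} (hS : IsTransv σ S) : term B σ = ∏ s ∈ S, -dqRe (cyc B σ s) :=
  prod_transv (isTransv_leads σ) hS fun i j h => by rw [dqRe_cyc_congr B h]

/-- Two inequivalent points lie in a common transversal. -/
theorem exists_transv (σ : Equiv.Perm (Fin n)) {i j : Fin n} (h : ¬ σ.SameCycle i j) :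
    ∃ S, IsTransv σ S ∧ i ∈ S ∧ j ∈ S := by
  classical
  refine ⟨insert i (insert j ((leads σ).filter
    fun s => ¬ σ.SameCycle i s ∧ ¬ σ.SameCycle j s)), ⟨?_, ?_⟩, by simp, by simp⟩
  · intro k
    by_cases hi : σ.SameCycle i k
    · exact ⟨i, by simp, hi⟩
    by_cases hj : σ.SameCycle j k
    · exact ⟨j, by simp, hj⟩
    obtain ⟨s, hs, hsk⟩ := (isTransv_leads σ).1 k
    refine ⟨s, ?_, hsk⟩
    simp only [Finset.mem_insert, Finset.mem_filter]
    exact Or.inr (Or.inr ⟨hs, fun h' => hi (h'.trans hsk), fun h' => hj (h'.trans hsk)⟩)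
  · intro s hs t ht hst
    simp only [Finset.mem_insert, Finset.mem_filter] at hs ht
    rcases hs with rfl | rfl | ⟨hs, hs1, hs2⟩ <;> rcases ht with rfl | rfl | ⟨ht, ht1, ht2⟩
    · rfl
    · exact absurd hst h
    · exact absurd hst ht1
    · exact absurd hst.symm h
    · rfl
    · exact absurd hst ht2
    · exact absurd hst.symm hs1
    · exact absurd hst.symm hs2
    · exact (isTransv_leads σ).2 s hs t ht hst

/-! ### Reversing a cycle -/

theorem sameCycle_inv_apply_right' {σ : Equiv.Perm (Fin n)} {i j : Fin n} :
    σ.SameCycle i (σ⁻¹ j) ↔ σ.SameCycle i j := by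
  rw [← Equiv.Perm.sameCycle_apply_right]
  simp

open Classical in
/-- The permutation obtained from `σ` by inverting its cycle through `j`. -/
def revCyc (σ : Equiv.Perm (Fin n)) (j : Fin n) : Equiv.Perm (Fin n) where
  toFun k := if σ.SameCycle j k then σ⁻¹ k else σ k
  invFun k := if σ.SameCycle j k then σ k else σ⁻¹ k
  left_inv k := by
    by_cases h : σ.SameCycle j k
    · simp [h]
    · simp [h, Equiv.Perm.sameCycle_apply_right]
  right_inv k := by
    by_cases h : σ.SameCycle j k
    · simp [h, Equiv.Perm.sameCycle_apply_right]
    · simp [h]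

theorem revCyc_apply_of_same {σ : Equiv.Perm (Fin n)} {j k : Fin n} (h : σ.SameCycle j k) :
    revCyc σ j k = σ⁻¹ k := by
  simp [revCyc, h]

theorem revCyc_apply_of_not {σ : Equiv.Perm (Fin n)} {j k : Fin n} (h : ¬ σ.SameCycle j k) :
    revCyc σ j k = σ k := by
  simp [revCyc, h]

theorem revCyc_iterate_path_of_same (B : Matrix (Fin n) (Fin n) DualQuaternion)
    {σ : Equiv.Perm (Fin n)} {j k : Fin n} (h : σ.SameCycle j k) (m : ℕ) :
    (revCyc σ j)^[m] k = (σ⁻¹ : Equiv.Perm (Fin n))^[m] k ∧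
      path B (revCyc σ j) m k = path B σ⁻¹ m k := by
  apply iterate_path_congr
  intro t _
  apply revCyc_apply_of_same
  have := sameCycle_iterate σ⁻¹ k t
  rw [Equiv.Perm.sameCycle_inv] at this
  exact h.trans this

theorem revCyc_iterate_path_of_not (B : Matrix (Fin n) (Fin n) DualQuaternion)
    {σ : Equiv.Perm (Fin n)} {j k : Fin n} (h : ¬ σ.SameCycle j k) (m : ℕ) :
    (revCyc σ j)^[m] k = σ^[m] k ∧ path B (revCyc σ j) m k = path B σ m k := by
  apply iterate_path_congr
  intro t _
  apply revCyc_apply_of_not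
  exact fun h' => h (h'.trans (sameCycle_iterate σ k t).symm)

theorem inv_iterate_iterate (σ : Equiv.Perm (Fin n)) (m : ℕ) (k : Fin n) :
    (σ⁻¹ : Equiv.Perm (Fin n))^[m] (σ^[m] k) = k :=
  Function.LeftInverse.iterate (g := (σ⁻¹ : Equiv.Perm (Fin n))) (f := σ)
    (fun x => by simp) m k

theorem per_inv (σ : Equiv.Perm (Fin n)) (k : Fin n) : per σ⁻¹ k = per σ k := by
  refine Function.minimalPeriod_eq_minimalPeriod_iff.2 fun m => ?_
  simp only [Function.IsPeriodicPt, Function.IsFixedPt]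
  constructor
  · intro h
    have := inv_iterate_iterate σ⁻¹ m k
    rwa [h, inv_inv] at this
  · intro h
    have := inv_iterate_iterate σ m k
    rwa [h] at this

theorem per_revCyc (σ : Equiv.Perm (Fin n)) (j k : Fin n) :
    per (revCyc σ j) k = per σ k := by
  by_cases h : σ.SameCycle j k
  · rw [← per_inv σ]
    refine Function.minimalPeriod_eq_minimalPeriod_iff.2 fun m => ?_
    simp only [Function.IsPeriodicPt, Function.IsFixedPt,
      (revCyc_iterate_path_of_same 0 h m).1]
  · refine Function.minimalPeriod_eq_minimalPeriod_iff.2 fun m => ?_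
    simp only [Function.IsPeriodicPt, Function.IsFixedPt,
      (revCyc_iterate_path_of_not 0 h m).1]

theorem sameCycle_revCyc (σ : Equiv.Perm (Fin n)) (j k l : Fin n) :
    (revCyc σ j).SameCycle k l ↔ σ.SameCycle k l := by
  by_cases h : σ.SameCycle j k
  · rw [← Equiv.Perm.sameCycle_inv (f := σ), sameCycle_iff, sameCycle_iff, per_revCyc, per_inv]
    simp only [(revCyc_iterate_path_of_same 0 h _).1]
  · rw [sameCycle_iff, sameCycle_iff, per_revCyc]
    simp only [(revCyc_iterate_path_of_not 0 h _).1]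

theorem revCyc_revCyc (σ : Equiv.Perm (Fin n)) (j : Fin n) :
    revCyc (revCyc σ j) j = σ := by
  ext1 k
  by_cases h : σ.SameCycle j k
  · rw [revCyc_apply_of_same ((sameCycle_revCyc σ j j k).2 h), Equiv.Perm.inv_eq_iff_eq,
      revCyc_apply_of_same ((Equiv.Perm.sameCycle_apply_right).2 h)]
    simp
  · rw [revCyc_apply_of_not (mt (sameCycle_revCyc σ j j k).1 h), revCyc_apply_of_not h]

theorem leads_revCyc (σ : Equiv.Perm (Fin n)) (j : Fin n) : leads (revCyc σ j) = leads σ := by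
  ext i
  simp only [mem_leads, sameCycle_revCyc]

/-- Reading a word of a Hermitian matrix backwards conjugates it. -/
theorem path_inv {B : Matrix (Fin n) (Fin n) DualQuaternion} (hB : Bᴴ = B)
    (σ : Equiv.Perm (Fin n)) (m : ℕ) (k : Fin n) :
    path B σ⁻¹ m (σ^[m] k) = star (path B σ m k) := by
  induction m generalizing k with
  | zero => simp [path]
  | succ m ih =>
    have hk : B (σ k) k = star (B k (σ k)) := by
      conv_lhs => rw [← hB]
      rfl
    have h1 : path B σ (m + 1) k = B k (σ k) * path B σ m (σ k) := rfl
    have h2 : path B σ⁻¹ 1 (σ k) = B (σ k) k := by simp [path]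
    rw [path_add B σ⁻¹ m 1, Function.iterate_succ_apply, ih, inv_iterate_iterate, h1, h2,
      star_mul, hk]

theorem cyc_revCyc_of_same {B : Matrix (Fin n) (Fin n) DualQuaternion} (hB : Bᴴ = B)
    {σ : Equiv.Perm (Fin n)} {j k : Fin n} (h : σ.SameCycle j k) :
    cyc B (revCyc σ j) k = star (cyc B σ k) := by
  rw [cyc, per_revCyc, (revCyc_iterate_path_of_same B h _).2, cyc, ← path_inv hB, iterate_per]

theorem cyc_revCyc_of_not (B : Matrix (Fin n) (Fin n) DualQuaternion)
    {σ : Equiv.Perm (Fin n)} {j k : Fin n} (h : ¬ σ.SameCycle j k) :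
    cyc B (revCyc σ j) k = cyc B σ k := by
  rw [cyc, per_revCyc, (revCyc_iterate_path_of_not B h _).2, cyc]

theorem dqRe_cyc_revCyc {B : Matrix (Fin n) (Fin n) DualQuaternion} (hB : Bᴴ = B)
    (σ : Equiv.Perm (Fin n)) (j k : Fin n) :
    dqRe (cyc B (revCyc σ j) k) = dqRe (cyc B σ k) := by
  by_cases h : σ.SameCycle j k
  · rw [cyc_revCyc_of_same hB h, dqRe_star]
  · rw [cyc_revCyc_of_not B h]

/-! ### Merging two cycles -/

section Merge

variable {σ : Equiv.Perm (Fin n)} {i j : Fin n}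

theorem mul_swap_apply_of_ne {k : Fin n} (hi : k ≠ i) (hj : k ≠ j) :
    (σ * Equiv.swap i j) k = σ k := by
  simp [Equiv.swap_apply_of_ne_of_ne hi hj]

theorem merge_iterate_path_of_not (B : Matrix (Fin n) (Fin n) DualQuaternion) {k : Fin n}
    (hi : ¬ σ.SameCycle i k) (hj : ¬ σ.SameCycle j k) (m : ℕ) :
    (σ * Equiv.swap i j)^[m] k = σ^[m] k ∧
      path B (σ * Equiv.swap i j) m k = path B σ m k := by
  apply iterate_path_congr
  intro t _
  apply mul_swap_apply_of_ne
  · rintro h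
    exact hi (h ▸ (sameCycle_iterate σ k t).symm)
  · rintro h
    exact hj (h ▸ (sameCycle_iterate σ k t).symm)

/-- After merging, the orbit of `i` first runs through the old cycle of `j`. Since rows `i` and
`j` of `B` agree, it also reads the old word of `j`. -/
theorem merge_iterate_path (B : Matrix (Fin n) (Fin n) DualQuaternion)
    (h : ¬ σ.SameCycle i j) (hrow : ∀ k, B i k = B j k) {m : ℕ} (hm : m < per σ j) :
    (σ * Equiv.swap i j)^[m + 1] i = σ^[m + 1] j ∧
      path B (σ * Equiv.swap i j) (m + 1) i = path B σ (m + 1) j := by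
  have h0 : (σ * Equiv.swap i j) i = σ j := by simp
  have key := @iterate_path_congr n B σ (σ * Equiv.swap i j) (σ j) m (by
    intro t ht
    apply mul_swap_apply_of_ne
    · intro h'
      rw [← Function.iterate_succ_apply] at h'
      exact h (h' ▸ (sameCycle_iterate σ j (t + 1)).symm)
    · rw [← Function.iterate_succ_apply]
      exact iterate_ne_of_lt_per (by omega) (by omega))
  rw [Function.iterate_succ_apply, Function.iterate_succ_apply, path, path, h0, key.1, key.2,
    hrow]
  exact ⟨rfl, rfl⟩

theorem merge_iterate_path_per (B : Matrix (Fin n) (Fin n) DualQuaternion)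
    (h : ¬ σ.SameCycle i j) (hrow : ∀ k, B i k = B j k) :
    (σ * Equiv.swap i j)^[per σ j] i = j ∧
      path B (σ * Equiv.swap i j) (per σ j) i = cyc B σ j := by
  obtain ⟨m, hm⟩ := Nat.exists_eq_succ_of_ne_zero (per_pos σ j).ne'
  have := merge_iterate_path B h hrow (m := m) (by omega)
  rw [cyc]
  conv_rhs at this => rw [← Nat.succ_eq_add_one, ← hm]
  rw [← Nat.succ_eq_add_one, ← hm, iterate_per] at this
  exact this

theorem per_merge (h : ¬ σ.SameCycle i j) :
    per (σ * Equiv.swap i j) i = per σ j + per σ i := by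
  have h' : ¬ σ.SameCycle j i := fun h' => h h'.symm
  have e1 := (merge_iterate_path_per 0 h (by simp)).1
  have e2 := (merge_iterate_path_per 0 h' (by simp)).1
  rw [Equiv.swap_comm] at e2
  have hp : (σ * Equiv.swap i j)^[per σ j + per σ i] i = i := by
    rw [add_comm, Function.iterate_add_apply, e1, e2]
  refine le_antisymm (Function.IsPeriodicPt.minimalPeriod_le
    (Nat.add_pos_left (per_pos σ j) _) hp) ?_
  by_contra hlt
  push Not at hlt
  have hq := iterate_per (σ * Equiv.swap i j) i
  have hq0 := per_pos (σ * Equiv.swap i j) i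
  generalize per (σ * Equiv.swap i j) i = q at hq hq0 hlt
  rcases le_or_gt q (per σ j) with hle | hgt
  · obtain ⟨m, rfl⟩ := Nat.exists_eq_succ_of_ne_zero hq0.ne'
    rw [Nat.succ_eq_add_one, (merge_iterate_path 0 h (by simp) (by omega)).1] at hq
    exact h (hq ▸ (sameCycle_iterate σ j _).symm)
  · obtain ⟨m, rfl⟩ := Nat.exists_eq_add_of_lt hgt
    rw [add_assoc, add_comm, Function.iterate_add_apply, e1] at hq
    have := (merge_iterate_path (σ := σ) 0 h' (by simp) (m := m) (by omega)).1
    rw [Equiv.swap_comm, hq] at this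
    exact iterate_ne_of_lt_per (by omega) (by omega) this.symm

/-- The merged cycle reads the word of `j` followed by the word of `i`. -/
theorem cyc_merge {B : Matrix (Fin n) (Fin n) DualQuaternion} (h : ¬ σ.SameCycle i j)
    (hrow : ∀ k, B i k = B j k) :
    cyc B (σ * Equiv.swap i j) i = cyc B σ j * cyc B σ i := by
  have h' : ¬ σ.SameCycle j i := fun h' => h h'.symm
  have e1 := merge_iterate_path_per B h hrow
  have e2 := merge_iterate_path_per B h' (fun k => (hrow k).symm)
  rw [Equiv.swap_comm] at e2
  rw [cyc, per_merge h, path_add, e1.1, e1.2, e2.2]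

theorem cyc_merge_of_not (B : Matrix (Fin n) (Fin n) DualQuaternion) {k : Fin n}
    (hi : ¬ σ.SameCycle i k) (hj : ¬ σ.SameCycle j k) :
    cyc B (σ * Equiv.swap i j) k = cyc B σ k := by
  have : per (σ * Equiv.swap i j) k = per σ k := by
    refine Function.minimalPeriod_eq_minimalPeriod_iff.2 fun m => ?_
    simp only [Function.IsPeriodicPt, Function.IsFixedPt,
      (merge_iterate_path_of_not 0 hi hj m).1]
  rw [cyc, this, (merge_iterate_path_of_not B hi hj _).2, cyc]

theorem sameCycle_merge_of_same_right (h : ¬ σ.SameCycle i j) {k : Fin n}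
    (hk : σ.SameCycle j k) : (σ * Equiv.swap i j).SameCycle i k := by
  obtain ⟨m, hm, hmk⟩ := (sameCycle_iff _ _ _).1 (sameCycle_inv_apply_right'.2 hk)
  have e := (merge_iterate_path (σ := σ) 0 h (by simp) hm).1
  rw [Function.iterate_succ_apply' σ, hmk, show σ (σ⁻¹ k) = k by simp] at e
  exact e ▸ sameCycle_iterate _ _ _

theorem sameCycle_merge_of_same_left (h : ¬ σ.SameCycle i j) {k : Fin n}
    (hk : σ.SameCycle i k) : (σ * Equiv.swap i j).SameCycle i k := by
  have h' : ¬ σ.SameCycle j i := fun h' => h h'.symm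
  have e1 := sameCycle_merge_of_same_right h (Equiv.Perm.SameCycle.refl σ j)
  have e2 := sameCycle_merge_of_same_right h' hk
  rw [Equiv.swap_comm] at e2
  exact e1.trans e2

theorem sameCycle_merge_of_not {k l : Fin n} (hi : ¬ σ.SameCycle i k)
    (hj : ¬ σ.SameCycle j k) : (σ * Equiv.swap i j).SameCycle k l ↔ σ.SameCycle k l := by
  have aux : ∀ m, (σ * Equiv.swap i j)^[m] k = σ^[m] k := fun m =>
    (merge_iterate_path_of_not 0 hi hj m).1
  constructor
  · intro h
    obtain ⟨m, -, rfl⟩ := (sameCycle_iff _ _ _).1 h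
    rw [aux]
    exact sameCycle_iterate _ _ _
  · intro h
    obtain ⟨m, -, rfl⟩ := (sameCycle_iff _ _ _).1 h
    rw [← aux]
    exact sameCycle_iterate _ _ _

theorem isTransv_merge (h : ¬ σ.SameCycle i j) {S : Finset (Fin n)} (hS : IsTransv σ S)
    (hi : i ∈ S) (hj : j ∈ S) : IsTransv (σ * Equiv.swap i j) (S.erase j) := by
  have hij : i ≠ j := fun e => h (e ▸ Equiv.Perm.SameCycle.refl σ i)
  have hout : ∀ s ∈ S.erase j, s ≠ i → ¬ σ.SameCycle i s ∧ ¬ σ.SameCycle j s := by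
    intro s hs hsi
    rw [Finset.mem_erase] at hs
    exact ⟨fun h' => hsi (hS.2 _ hi _ hs.2 h').symm, fun h' => hs.1 (hS.2 _ hj _ hs.2 h').symm⟩
  constructor
  · intro k
    by_cases hik : σ.SameCycle i k
    · exact ⟨i, by simp [hij, hi], sameCycle_merge_of_same_left h hik⟩
    by_cases hjk : σ.SameCycle j k
    · exact ⟨i, by simp [hij, hi], sameCycle_merge_of_same_right h hjk⟩
    obtain ⟨s, hs, hsk⟩ := hS.1 k
    refine ⟨s, Finset.mem_erase.2 ⟨?_, hs⟩, ((sameCycle_merge_of_not hik hjk).2 hsk.symm).symm⟩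
    rintro rfl
    exact hjk hsk
  · intro s hs t ht hst
    by_cases hsi : s = i
    · by_cases hti : t = i
      · rw [hsi, hti]
      · have := hout t ht hti
        exact hS.2 _ (Finset.mem_of_mem_erase hs) _ (Finset.mem_of_mem_erase ht)
          ((sameCycle_merge_of_not this.1 this.2).1 hst.symm).symm
    · have := hout s hs hsi
      exact hS.2 _ (Finset.mem_of_mem_erase hs) _ (Finset.mem_of_mem_erase ht)
        ((sameCycle_merge_of_not this.1 this.2).1 hst)

end Merge

/-! ### Vanishing for repeated rows -/

/-- Converse of merging: multiplying by `swap i j` separates `i` and `j`. -/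
theorem not_sameCycle_mul_swap {σ : Equiv.Perm (Fin n)} {i j : Fin n} (hij : i ≠ j)
    (h : σ.SameCycle i j) : ¬ (σ * Equiv.swap i j).SameCycle i j := by
  obtain ⟨m, hm, hmi⟩ := (sameCycle_iff _ _ _).1 h.symm
  have h0 : (σ * Equiv.swap i j) i = σ j := by simp
  have hne : ∀ t, 0 < t → t < m → σ^[t] j ≠ i := fun t _ ht e =>
    ht.ne (iterate_injOn_per (ht.trans hm) hm (e.trans hmi.symm))
  have key : ∀ t < m, (σ * Equiv.swap i j)^[t + 1] i = σ^[t + 1] j := by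
    intro t ht
    rw [Function.iterate_succ_apply, Function.iterate_succ_apply, h0]
    refine (iterate_path_congr 0 fun u hu => ?_).1
    rw [← Function.iterate_succ_apply]
    exact mul_swap_apply_of_ne (hne _ (by omega) (by omega))
      (iterate_ne_of_lt_per (by omega) (by omega))
  have hm0 : m ≠ 0 := by
    rintro rfl
    exact hij hmi.symm
  obtain ⟨m, rfl⟩ := Nat.exists_eq_succ_of_ne_zero hm0
  have hper : per (σ * Equiv.swap i j) i ≤ m + 1 :=
    Function.IsPeriodicPt.minimalPeriod_le (Nat.succ_pos m) ((key m (by omega)).trans hmi)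
  intro h'
  obtain ⟨r, hr, hrj⟩ := (sameCycle_iff _ _ _).1 h'
  rcases r with _ | r
  · exact hij hrj
  · rw [key r (by omega)] at hrj
    exact iterate_ne_of_lt_per (by omega) (by omega) hrj

theorem term_merge {B : Matrix (Fin n) (Fin n) DualQuaternion} {σ : Equiv.Perm (Fin n)}
    {i j : Fin n} (h : ¬ σ.SameCycle i j) (hrow : ∀ k, B i k = B j k)
    {S : Finset (Fin n)} (hS : IsTransv σ S) (hi : i ∈ S) (hj : j ∈ S) :
    term B (σ * Equiv.swap i j) =
      -dqRe (cyc B σ j * cyc B σ i) * ∏ s ∈ (S.erase j).erase i, -dqRe (cyc B σ s) := by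
  have hij : i ≠ j := fun e => h (e ▸ Equiv.Perm.SameCycle.refl σ i)
  rw [term_eq B (isTransv_merge h hS hi hj),
    ← Finset.mul_prod_erase _ _ (Finset.mem_erase.2 ⟨hij, hi⟩), cyc_merge h hrow]
  congr 1
  refine Finset.prod_congr rfl fun s hs => ?_
  simp only [Finset.mem_erase] at hs
  rw [cyc_merge_of_not B (fun h' => hs.1 (hS.2 _ hi _ hs.2.2 h').symm)
    (fun h' => hs.2.1 (hS.2 _ hj _ hs.2.2 h').symm)]

/-- If `i` and `j` lie in different cycles of `σ`, with cycle words `x` and `y`, then merging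
the two cycles of `σ`, and of `σ` with the cycle of `j` reversed, gives the words `yx` and
`y*x`, and `Re(yx) + Re(y*x) = 2 Re(x) Re(y)`. -/
theorem term_cancel {B : Matrix (Fin n) (Fin n) DualQuaternion} (hB : Bᴴ = B)
    {σ : Equiv.Perm (Fin n)} {i j : Fin n} (h : ¬ σ.SameCycle i j)
    (hrow : ∀ k, B i k = B j k) :
    (term B σ + term B (σ * Equiv.swap i j)) +
      (term B (revCyc σ j) + term B (revCyc σ j * Equiv.swap i j)) = 0 := by
  have hij : i ≠ j := fun e => h (e ▸ Equiv.Perm.SameCycle.refl σ i)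
  obtain ⟨S, hS, hi, hj⟩ := exists_transv σ h
  have hS' : IsTransv (revCyc σ j) S := by
    simpa only [IsTransv, sameCycle_revCyc] using hS
  have e1 : term B σ = -dqRe (cyc B σ j) * (-dqRe (cyc B σ i) *
      ∏ s ∈ (S.erase j).erase i, -dqRe (cyc B σ s)) := by
    rw [term_eq B hS, ← Finset.mul_prod_erase _ _ hj,
      ← Finset.mul_prod_erase _ _ (Finset.mem_erase.2 ⟨hij, hi⟩)]
  have e2 : term B (revCyc σ j) = term B σ := by
    simp only [term, leads_revCyc, dqRe_cyc_revCyc hB]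
  have e3 := term_merge (mt (sameCycle_revCyc σ j i j).1 h) hrow hS' hi hj
  simp only [dqRe_cyc_revCyc hB] at e3
  rw [cyc_revCyc_of_same hB (Equiv.Perm.SameCycle.refl σ j),
    cyc_revCyc_of_not B (fun h' => h h'.symm)] at e3
  have key := dqRe_mul_add_dqRe_star_mul (cyc B σ j) (cyc B σ i)
  rw [e2, e3, term_merge h hrow hS hi hj, e1]
  generalize (∏ s ∈ (S.erase j).erase i, -dqRe (cyc B σ s)) = P
  linear_combination (-P) * key

/-- The sum over all permutations of the products of real parts of cycle words; up to the
sign `(-1) ^ n` this is the Chen determinant of a Hermitian matrix. -/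
def wsum (B : Matrix (Fin n) (Fin n) DualQuaternion) : DualNumber ℝ :=
  ∑ σ : Equiv.Perm (Fin n), term B σ

theorem wsum_eq_zero {B : Matrix (Fin n) (Fin n) DualQuaternion} (hB : Bᴴ = B) {i j : Fin n}
    (hij : i ≠ j) (hrow : ∀ k, B i k = B j k) : wsum B = 0 := by
  classical
  have hsplit : wsum B = ∑ σ ∈ Finset.univ.filter (fun σ : Equiv.Perm (Fin n) =>
      ¬ σ.SameCycle i j), (term B σ + term B (σ * Equiv.swap i j)) := by
    rw [wsum, ← Finset.sum_filter_not_add_sum_filter _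
      (fun σ : Equiv.Perm (Fin n) => σ.SameCycle i j), Finset.sum_add_distrib]
    congr 1
    refine Finset.sum_bij' (fun σ _ => σ * Equiv.swap i j) (fun σ _ => σ * Equiv.swap i j)
      ?_ ?_ ?_ ?_ ?_
    · intro σ hσ
      simp only [Finset.mem_filter, Finset.mem_univ, true_and] at hσ ⊢
      exact not_sameCycle_mul_swap hij hσ
    · intro σ hσ
      simp only [Finset.mem_filter, Finset.mem_univ, true_and] at hσ ⊢
      exact sameCycle_merge_of_same_right hσ (Equiv.Perm.SameCycle.refl σ j)
    · intro σ _
      simp [mul_assoc]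
    · intro σ _
      simp [mul_assoc]
    · intro σ _
      simp [mul_assoc]
  have hrev : wsum B = ∑ σ ∈ Finset.univ.filter (fun σ : Equiv.Perm (Fin n) =>
      ¬ σ.SameCycle i j),
        (term B (revCyc σ j) + term B (revCyc σ j * Equiv.swap i j)) := by
    rw [hsplit]
    refine Finset.sum_bij' (fun σ _ => revCyc σ j) (fun σ _ => revCyc σ j) ?_ ?_ ?_ ?_ ?_
    · intro σ hσ
      simpa [sameCycle_revCyc] using hσ
    · intro σ hσ
      simpa [sameCycle_revCyc] using hσ
    · intro σ _
      exact revCyc_revCyc σ j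
    · intro σ _
      exact revCyc_revCyc σ j
    · intro σ _
      rw [revCyc_revCyc]
  apply dn_add_self_eq_zero
  nth_rewrite 1 [hsplit]
  rw [hrev, ← Finset.sum_add_distrib]
  refine Finset.sum_eq_zero fun σ hσ => ?_
  simp only [Finset.mem_filter, Finset.mem_univ, true_and] at hσ
  exact term_cancel hB hσ hrow

/-! ### Invariance under relabelling -/

theorem iterate_path_conj (B : Matrix (Fin n) (Fin n) DualQuaternion)
    (π σ : Equiv.Perm (Fin n)) (m : ℕ) (a : Fin n) :
    (π * σ * π⁻¹)^[m] (π a) = π (σ^[m] a) ∧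
      path B (π * σ * π⁻¹) m (π a) = path (B.submatrix π π) σ m a := by
  induction m generalizing a with
  | zero => simp [path]
  | succ m ih =>
    have h : (π * σ * π⁻¹) (π a) = π (σ a) := by simp
    rw [Function.iterate_succ_apply, Function.iterate_succ_apply, path, path, h, (ih _).1,
      (ih _).2]
    exact ⟨rfl, rfl⟩

theorem cyc_conj (B : Matrix (Fin n) (Fin n) DualQuaternion)
    (π σ : Equiv.Perm (Fin n)) (a : Fin n) :
    cyc B (π * σ * π⁻¹) (π a) = cyc (B.submatrix π π) σ a := by
  have : per (π * σ * π⁻¹) (π a) = per σ a := by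
    refine Function.minimalPeriod_eq_minimalPeriod_iff.2 fun m => ?_
    simp only [Function.IsPeriodicPt, Function.IsFixedPt, (iterate_path_conj 0 π σ m a).1,
      EmbeddingLike.apply_eq_iff_eq]
  rw [cyc, this, (iterate_path_conj B π σ _ a).2, cyc]

theorem term_conj (B : Matrix (Fin n) (Fin n) DualQuaternion)
    (π σ : Equiv.Perm (Fin n)) :
    term B (π * σ * π⁻¹) = term (B.submatrix π π) σ := by
  have hT : IsTransv (π * σ * π⁻¹) ((leads σ).map π.toEmbedding) := by
    have := isTransv_leads σ
    constructor
    · intro k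
      obtain ⟨s, hs, hsk⟩ := this.1 (π⁻¹ k)
      refine ⟨π s, by simpa using hs, ?_⟩
      rw [Equiv.Perm.sameCycle_conj]
      simpa using hsk
    · intro s hs t ht hst
      rw [Equiv.Perm.sameCycle_conj] at hst
      rw [Finset.mem_map_equiv] at hs ht
      exact π.symm.injective (this.2 _ hs _ ht hst)
  rw [term_eq B hT, Finset.prod_map, term]
  exact Finset.prod_congr rfl fun s _ => by rw [← cyc_conj]; rfl

theorem wsum_submatrix_perm (B : Matrix (Fin n) (Fin n) DualQuaternion)
    (π : Equiv.Perm (Fin n)) : wsum (B.submatrix π π) = wsum B := by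
  simp only [wsum, ← term_conj]
  exact (MulAut.conj π).toEquiv.sum_comp (fun σ => term B σ)

/-- Only the relabellings `f` that are permutations contribute. -/
theorem sum_wsum_submatrix {A : Matrix (Fin n) (Fin n) DualQuaternion} (hA : Aᴴ = A) :
    ∑ f : Fin n → Fin n, wsum (A.submatrix f f) = (n.factorial : DualNumber ℝ) * wsum A := by
  classical
  have h1 : ∑ f : Fin n → Fin n, wsum (A.submatrix f f) =
      ∑ f ∈ Finset.univ.filter (fun f : Fin n → Fin n => Function.Bijective f),
        wsum (A.submatrix f f) := by
    symm
    apply Finset.sum_subset (Finset.filter_subset _ _)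
    intro f _ hf
    simp only [Finset.mem_filter, Finset.mem_univ, true_and] at hf
    rw [← Finite.injective_iff_bijective, Function.Injective] at hf
    push Not at hf
    obtain ⟨i, j, hfij, hij⟩ := hf
    refine wsum_eq_zero (i := i) (j := j) ?_ hij ?_
    · rw [Matrix.conjTranspose_submatrix, hA]
    · intro k
      simp [hfij]
  have h2 : ∑ f ∈ Finset.univ.filter (fun f : Fin n → Fin n => Function.Bijective f),
      wsum (A.submatrix f f) = ∑ π : Equiv.Perm (Fin n), wsum (A.submatrix π π) := by
    symm
    refine Finset.sum_bij (fun π _ => π) ?_ ?_ ?_ ?_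
    · intro π _
      exact Finset.mem_filter.2 ⟨Finset.mem_univ _, π.bijective⟩
    · intro π _ π' _ h
      exact DFunLike.coe_injective h
    · intro f hf
      exact ⟨Equiv.ofBijective f (by simpa using hf), Finset.mem_univ _, rfl⟩
    · intro π _
      rfl
  rw [h1, h2]
  simp [wsum_submatrix_perm, Fintype.card_perm]

/-! ### Traces of powers -/

/-- The word `A a (g 0) * A (g 0) (g 1) * ⋯ * A (g (m-1)) b`. -/
def openWord (A : Matrix (Fin n) (Fin n) DualQuaternion) :
    (m : ℕ) → Fin n → Fin n → (Fin m → Fin n) → DualQuaternion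
  | 0, a, b, _ => A a b
  | m + 1, a, b, g => A a (g 0) * openWord A m (g 0) b (Fin.tail g)

theorem sum_openWord (A : Matrix (Fin n) (Fin n) DualQuaternion) (m : ℕ) (a b : Fin n) :
    ∑ g : Fin m → Fin n, openWord A m a b g = (A ^ (m + 1)) a b := by
  induction m generalizing a with
  | zero => simp [openWord]
  | succ m ih =>
    rw [← (Fin.consEquiv fun _ : Fin (m + 1) => Fin n).sum_comp, Fintype.sum_prod_type,
      pow_succ', Matrix.mul_apply]
    refine Finset.sum_congr rfl fun v _ => ?_
    rw [← ih, Finset.mul_sum]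
    refine Finset.sum_congr rfl fun g _ => ?_
    simp [openWord, Fin.consEquiv]

theorem path_submatrix (A : Matrix (Fin n) (Fin n) DualQuaternion) (f : Fin n → Fin n)
    (σ : Equiv.Perm (Fin n)) (m : ℕ) (i : Fin n) :
    path (A.submatrix f f) σ (m + 1) i =
      openWord A m (f i) (f (σ^[m + 1] i)) (fun k => f (σ^[(k : ℕ) + 1] i)) := by
  induction m generalizing i with
  | zero => simp [path, openWord]
  | succ m ih =>
    rw [path, ih, openWord]
    rfl

/-- The closed word of `A` along the vertices `g 0, …, g (p-1)`; the value at `p = 0` is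
irrelevant. -/
def loopWord (A : Matrix (Fin n) (Fin n) DualQuaternion) :
    (p : ℕ) → (Fin p → Fin n) → DualQuaternion
  | 0, _ => 0
  | m + 1, g => openWord A m (g 0) (g 0) (Fin.tail g)

theorem cyc_submatrix (A : Matrix (Fin n) (Fin n) DualQuaternion) (f : Fin n → Fin n)
    (σ : Equiv.Perm (Fin n)) (i : Fin n) :
    cyc (A.submatrix f f) σ i = loopWord A (per σ i) (fun k => f (σ^[(k : ℕ)] i)) := by
  have h := iterate_per σ i
  have h0 := per_pos σ i
  unfold cyc
  generalize per σ i = p at h h0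
  obtain ⟨m, rfl⟩ := Nat.exists_eq_succ_of_ne_zero h0.ne'
  rw [path_submatrix, h]
  rfl

theorem sum_dqRe_loopWord (A : Matrix (Fin n) (Fin n) DualQuaternion) {p : ℕ} (hp : 0 < p) :
    ∑ g : Fin p → Fin n, -dqRe (loopWord A p g) = -dqRe (Matrix.trace (A ^ p)) := by
  obtain ⟨m, rfl⟩ := Nat.exists_eq_succ_of_ne_zero hp.ne'
  rw [Finset.sum_neg_distrib]
  simp only [← dqReHom_apply]
  rw [← map_sum, ← (Fin.consEquiv fun _ : Fin (m + 1) => Fin n).sum_comp,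
    Fintype.sum_prod_type, Matrix.trace]
  congr 2
  refine Finset.sum_congr rfl fun v _ => ?_
  rw [Matrix.diag_apply]
  refine Eq.trans ?_ (sum_openWord A m v v)
  refine Finset.sum_congr rfl fun g _ => ?_
  simp [loopWord, Fin.consEquiv]

theorem bijective_leads (σ : Equiv.Perm (Fin n)) :
    Function.Bijective (fun x : (Σ s : leads σ, Fin (per σ s)) => σ^[(x.2 : ℕ)] (x.1 : Fin n)) := by
  constructor
  · rintro ⟨⟨s, hs⟩, k⟩ ⟨⟨t, ht⟩, l⟩ h
    simp only at h
    have hst : s = t := (isTransv_leads σ).2 s hs t ht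
      ((sameCycle_iterate σ s k).trans (h ▸ (sameCycle_iterate σ t l).symm))
    subst hst
    have := iterate_injOn_per k.2 l.2 h
    rw [Fin.ext this]
  · intro k
    obtain ⟨s, hs, hsk⟩ := (isTransv_leads σ).1 k
    obtain ⟨m, hm, h⟩ := (sameCycle_iff _ _ _).1 hsk
    exact ⟨⟨⟨s, hs⟩, ⟨m, hm⟩⟩, h⟩

/-- Summing over all labellings of the vertices turns each cycle word into a trace. -/
theorem sum_term_submatrix (A : Matrix (Fin n) (Fin n) DualQuaternion)
    (σ : Equiv.Perm (Fin n)) :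
    ∑ f : Fin n → Fin n, term (A.submatrix f f) σ =
      ∏ s ∈ leads σ, -dqRe (Matrix.trace (A ^ per σ s)) := by
  classical
  have h1 : ∏ s ∈ leads σ, -dqRe (Matrix.trace (A ^ per σ s)) =
      ∏ s : leads σ, ∑ g : Fin (per σ s) → Fin n, -dqRe (loopWord A (per σ s) g) := by
    rw [← Finset.prod_coe_sort]
    exact Finset.prod_congr rfl fun s _ => (sum_dqRe_loopWord A (per_pos σ s)).symm
  rw [h1, Finset.prod_univ_sum, Fintype.piFinset_univ]
  let e := Equiv.ofBijective _ (bijective_leads σ)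
  let E : (Fin n → Fin n) ≃ ((s : leads σ) → Fin (per σ s) → Fin n) :=
    (Equiv.arrowCongr e.symm (Equiv.refl (Fin n))).trans
      (Equiv.piCurry (fun (s : leads σ) (_ : Fin (per σ s)) => Fin n))
  refine Fintype.sum_equiv E _ _ fun f => ?_
  rw [term, ← Finset.prod_coe_sort]
  refine Finset.prod_congr rfl fun s _ => ?_
  rw [cyc_submatrix]
  rfl

/-- For Hermitian matrices `wsum` is determined by the real parts of the traces of the powers. -/
theorem wsum_eq_of_trace {A D : Matrix (Fin n) (Fin n) DualQuaternion} (hA : Aᴴ = A)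
    (hD : Dᴴ = D) (h : ∀ m, dqRe (Matrix.trace (A ^ m)) = dqRe (Matrix.trace (D ^ m))) :
    wsum A = wsum D := by
  have key : (n.factorial : DualNumber ℝ) * wsum A = n.factorial * wsum D := by
    rw [← sum_wsum_submatrix hA, ← sum_wsum_submatrix hD]
    simp only [wsum]
    rw [Finset.sum_comm, Finset.sum_comm (γ := Fin n → Fin n)]
    simp only [sum_term_submatrix, h]
  have h2 : (n.factorial : ℝ) • wsum A = (n.factorial : ℝ) • wsum D := by
    simpa [← Nat.cast_smul_eq_nsmul ℝ, ← nsmul_eq_mul] using key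
  exact smul_right_injective _ (Nat.cast_ne_zero.2 n.factorial_ne_zero) h2

/-! ### The Chen determinant of a Hermitian matrix -/

theorem path_eq_list_prod (B : Matrix (Fin n) (Fin n) DualQuaternion)
    (σ : Equiv.Perm (Fin n)) (m : ℕ) (i : Fin n) :
    path B σ m i = ((List.range m).map fun k => B (σ^[k] i) (σ (σ^[k] i))).prod := by
  induction m generalizing i with
  | zero => rfl
  | succ m ih =>
    rw [path, ih, List.range_succ_eq_map, List.map_cons, List.prod_cons, List.map_map]
    rfl

theorem per_le (σ : Equiv.Perm (Fin n)) (i : Fin n) : per σ i ≤ n := by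
  have : Function.Injective (fun k : Fin (per σ i) => σ^[(k : ℕ)] i) := fun a b h =>
    Fin.ext (iterate_injOn_per a.2 b.2 h)
  simpa using Fintype.card_le_of_injective _ this

theorem cycleList_eq (σ : Equiv.Perm (Fin n)) (i : Fin n) :
    cycleList σ i = (List.range (per σ i)).map fun k => σ^[k] i := by
  obtain ⟨m, hm⟩ := Nat.exists_eq_succ_of_ne_zero (per_pos σ i).ne'
  obtain ⟨r, hr⟩ := Nat.exists_eq_add_of_le (per_le σ i)
  have hn : n = m + (r + 1) := by omega
  have hrange : List.range n = List.range m ++ (List.range (r + 1)).map (m + ·) := by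
    rw [hn, List.range_add]
  rw [cycleList, hm, Nat.succ_eq_add_one, List.range_succ_eq_map, List.map_cons, hrange,
    List.map_append, List.takeWhile_append_of_pos]
  · rw [List.range_succ_eq_map]
    simp only [List.map_cons]
    rw [List.takeWhile_cons_of_neg]
    · simp [Function.comp_def, Equiv.Perm.iterate_eq_pow]
    · have := iterate_per σ i
      rw [hm, Equiv.Perm.iterate_eq_pow] at this
      simp [this]
  · intro a ha
    obtain ⟨k, hk, rfl⟩ := List.mem_map.1 ha
    rw [List.mem_range] at hk
    have := iterate_ne_of_lt_per (σ := σ) (i := i) (m := k + 1) (by omega) (by omega)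
    rw [Equiv.Perm.iterate_eq_pow] at this
    simpa using this

theorem cycleList_prod (B : Matrix (Fin n) (Fin n) DualQuaternion)
    (σ : Equiv.Perm (Fin n)) (i : Fin n) :
    ((cycleList σ i).map fun k => B k (σ k)).prod = cyc B σ i := by
  rw [cycleList_eq, List.map_map, cyc, path_eq_list_prod]
  rfl

theorem mem_cycleList {σ : Equiv.Perm (Fin n)} {i j : Fin n} :
    j ∈ cycleList σ i ↔ σ.SameCycle i j := by
  rw [cycleList_eq, sameCycle_iff]
  simp [eq_comm]

open Classical in
theorem chenLeaders_eq (σ : Equiv.Perm (Fin n)) :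
    chenLeaders σ = (List.finRange n).reverse.filter (· ∈ leads σ) := by
  rw [chenLeaders, ← List.filter_reverse]
  congr 1
  ext i
  rw [Bool.eq_iff_iff]
  simp [mem_leads, mem_cycleList]

theorem list_prod_map_filter {M : Type*} [Monoid M] {α : Type*} (L : List α) (p : α → Prop)
    [DecidablePred p] (g : α → M) :
    ((L.filter p).map g).prod = (L.map fun a => if p a then g a else 1).prod := by
  induction L with
  | nil => rfl
  | cons a L ih => by_cases h : p a <;> simp [h, ih]

open Classical in
/-- The factor of the Chen term at `l`: minus the cycle word if `l` leads its cycle. -/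
def chenFactor (B : Matrix (Fin n) (Fin n) DualQuaternion) (σ : Equiv.Perm (Fin n))
    (l : Fin n) : DualQuaternion := if l ∈ leads σ then -cyc B σ l else 1

open Classical in
/-- `chenFactor` with the cycle word replaced by its real part. -/
def chenFactorRe (B : Matrix (Fin n) (Fin n) DualQuaternion) (σ : Equiv.Perm (Fin n))
    (l : Fin n) : DualNumber ℝ := if l ∈ leads σ then -dqRe (cyc B σ l) else 1

theorem Cdet_eq_sum (B : Matrix (Fin n) (Fin n) DualQuaternion) :
    Cdet B = (-1) ^ n *
      ∑ σ : Equiv.Perm (Fin n), (((List.finRange n).reverse).map (chenFactor B σ)).prod := by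
  classical
  rw [Cdet, Finset.mul_sum]
  refine Finset.sum_congr rfl fun σ _ => ?_
  have hlen : (chenLeaders σ).length ≤ n := by
    rw [chenLeaders_eq]
    exact (List.length_filter_le _ _).trans (by simp)
  have hprod : ((chenOrder σ).map (fun i => B i (σ i))).prod =
      ((chenLeaders σ).map (cyc B σ)).prod := by
    rw [chenOrder, List.map_flatten, List.prod_flatten, List.map_map, List.map_map]
    congr 1
    exact List.map_congr_left fun i _ => cycleList_prod B σ i
  have hneg : ((List.finRange n).reverse.map (chenFactor B σ)).prod =
      (-1) ^ (chenLeaders σ).length * ((chenLeaders σ).map (cyc B σ)).prod := by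
    have : ((List.finRange n).reverse.map (chenFactor B σ)).prod =
        ((chenLeaders σ).map (fun l => -cyc B σ l)).prod := by
      rw [chenLeaders_eq, list_prod_map_filter]
      rfl
    rw [this]
    induction chenLeaders σ with
    | nil => simp
    | cons a L ih =>
      rw [List.map_cons, List.prod_cons, ih, List.map_cons, List.prod_cons, List.length_cons,
        pow_succ, ← mul_assoc, ← mul_assoc,
        ← ((Commute.neg_one_left (-cyc B σ a)).pow_left L.length).eq]
      simp
  rw [hprod, hneg, ← mul_assoc, ← pow_add]
  congr 1
  have : n + (chenLeaders σ).length = (n - (chenLeaders σ).length) +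
      2 * (chenLeaders σ).length := by omega
  rw [this, pow_add, pow_mul]
  simp

/-- Cycle words may be replaced by their real parts one leader at a time: reversing the cycle
of the leader `l` conjugates its word and leaves all other factors alone. -/
theorem sum_chenFactor {B : Matrix (Fin n) (Fin n) DualQuaternion} (hB : Bᴴ = B)
    (L₂ L₁ : List (Fin n)) (hL : L₂.Nodup) :
    ∑ σ : Equiv.Perm (Fin n),
        toDQ (L₁.map (chenFactorRe B σ)).prod * (L₂.map (chenFactor B σ)).prod =
      ∑ σ : Equiv.Perm (Fin n), toDQ ((L₁ ++ L₂).map (chenFactorRe B σ)).prod := by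
  classical
  induction L₂ generalizing L₁ with
  | nil => simp
  | cons l L ih =>
    rw [List.nodup_cons] at hL
    have ihl := ih (L₁ ++ [l]) hL.2
    rw [List.append_assoc, List.singleton_append] at ihl
    rw [← ihl]
    -- reverse the cycle of `l` when `l` is a leader
    let ρ : Equiv.Perm (Fin n) → Equiv.Perm (Fin n) := fun σ =>
      if l ∈ leads σ then revCyc σ l else σ
    have hρ : Function.Involutive ρ := by
      intro σ
      by_cases h : l ∈ leads σ
      · simp [ρ, h, leads_revCyc, revCyc_revCyc]
      · simp [ρ, h]
    have hlead : ∀ σ, leads (ρ σ) = leads σ := by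
      intro σ
      by_cases h : l ∈ leads σ <;> simp [ρ, h, leads_revCyc]
    have hRe : ∀ σ, chenFactorRe B (ρ σ) = chenFactorRe B σ := by
      intro σ
      funext k
      unfold chenFactorRe
      rw [hlead]
      by_cases h : l ∈ leads σ
      · simp only [ρ, h, if_true, dqRe_cyc_revCyc hB]
      · simp only [ρ, h, if_false]
    have hother : ∀ σ, L.map (chenFactor B (ρ σ)) = L.map (chenFactor B σ) := by
      intro σ
      refine List.map_congr_left fun k hk => ?_
      unfold chenFactor
      rw [hlead]
      by_cases hkl : k ∈ leads σ
      · by_cases h : l ∈ leads σ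
        · have hne : ¬ σ.SameCycle l k := fun hs =>
            hL.1 ((isTransv_leads σ).2 l h k hkl hs ▸ hk)
          simp only [ρ, h, hkl, if_true, cyc_revCyc_of_not B hne]
        · simp only [ρ, h, if_false]
      · simp [hkl]
    have hfac : ∀ σ, chenFactor B σ l + chenFactor B (ρ σ) l =
        toDQ (chenFactorRe B σ l) + toDQ (chenFactorRe B σ l) := by
      intro σ
      unfold chenFactor chenFactorRe
      rw [hlead]
      by_cases h : l ∈ leads σ
      · simp only [ρ, h, if_true]
        rw [cyc_revCyc_of_same hB (Equiv.Perm.SameCycle.refl σ l), ← neg_add, add_star_eq]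
        simp only [← toDQHom_apply, map_neg, neg_add]
      · simp only [h, if_false, ← toDQHom_apply, map_one]
    apply dq_add_self_cancel
    nth_rewrite 2 [← Equiv.sum_comp (hρ.toPerm ρ)]
    rw [← Finset.sum_add_distrib, ← Finset.sum_add_distrib]
    refine Finset.sum_congr rfl fun σ _ => ?_
    simp only [Function.Involutive.coe_toPerm, hRe, hother, List.map_cons, List.prod_cons,
      List.map_append, List.prod_append, List.map_nil, List.prod_nil, mul_one]
    rw [← mul_add, ← add_mul, hfac]
    simp only [← toDQHom_apply, map_mul]
    noncomm_ring

theorem Cdet_eq_wsum {B : Matrix (Fin n) (Fin n) DualQuaternion} (hB : Bᴴ = B) :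
    Cdet B = toDQ ((-1) ^ n * wsum B) := by
  classical
  have h := sum_chenFactor hB (List.finRange n).reverse []
    (List.nodup_reverse.2 (List.nodup_finRange n))
  simp only [List.map_nil, List.prod_nil, ← toDQHom_apply, map_one, one_mul,
    List.nil_append] at h
  rw [Cdet_eq_sum, h, ← toDQHom_apply, map_mul, wsum, map_sum]
  congr 1
  · simp
  · refine Finset.sum_congr rfl fun σ _ => ?_
    congr 1
    rw [List.map_reverse, List.prod_reverse, ← List.ofFn_eq_map, List.prod_ofFn, term]
    simp [chenFactorRe, Finset.prod_ite_mem]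

theorem wsum_diagonal (d : Fin n → DualNumber ℝ) :
    wsum (Matrix.diagonal fun i => toDQ (d i)) = (-1) ^ n * ∏ i, d i := by
  classical
  rw [wsum, Finset.sum_eq_single 1]
  · have hl : leads (1 : Equiv.Perm (Fin n)) = Finset.univ := by
      ext i
      simp only [mem_leads, Equiv.Perm.sameCycle_one, Finset.mem_univ, iff_true]
      rintro j rfl
      exact le_rfl
    have hp : ∀ i : Fin n, per 1 i = 1 := fun i =>
      Function.minimalPeriod_eq_one_iff_isFixedPt.2 rfl
    rw [term, hl]
    simp [cyc, hp, path, dqRe_toDQ, Finset.prod_neg]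
  · intro σ _ hσ
    obtain ⟨k, hk⟩ : ∃ k, σ k ≠ k := by
      by_contra! h
      exact hσ (Equiv.ext h)
    obtain ⟨s, hs, hsk⟩ := (isTransv_leads σ).1 k
    have hss : σ s ≠ s := fun h => hk ((hsk.apply_eq_self_iff).1 h)
    refine Finset.prod_eq_zero hs ?_
    obtain ⟨m, hm⟩ := Nat.exists_eq_succ_of_ne_zero (per_pos σ s).ne'
    rw [cyc, hm, path, Matrix.diagonal_apply_ne _ hss.symm, zero_mul, ← dqReHom_apply,
      map_zero, neg_zero]
  · simp

theorem dqRe_trace_mul_comm (M N : Matrix (Fin n) (Fin n) DualQuaternion) :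
    dqRe (Matrix.trace (M * N)) = dqRe (Matrix.trace (N * M)) := by
  simp only [Matrix.trace, Matrix.diag_apply, Matrix.mul_apply, ← dqReHom_apply, map_sum]
  rw [Finset.sum_comm]
  simp only [dqReHom_apply, dqRe_mul_comm]

theorem conj_pow {U A : Matrix (Fin n) (Fin n) DualQuaternion} (hU : Uᴴ * U = 1) (m : ℕ) :
    (U * A * Uᴴ) ^ (m + 1) = U * A ^ (m + 1) * Uᴴ := by
  induction m with
  | zero => simp
  | succ m ih =>
    rw [pow_succ, ih, pow_succ A (m + 1)]
    calc U * A ^ (m + 1) * Uᴴ * (U * A * Uᴴ) = U * A ^ (m + 1) * (Uᴴ * U) * A * Uᴴ := by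
          simp only [mul_assoc]
      _ = _ := by rw [hU, mul_one]; simp only [mul_assoc]

theorem Cdet_of_hasEigenvalues {A : Matrix (Fin n) (Fin n) DualQuaternion} (hA : Aᴴ = A)
    {d : Fin n → DualNumber ℝ} (h : HasEigenvalues A d) : Cdet A = toDQ (∏ i, d i) := by
  obtain ⟨U, hU, hD⟩ := h
  have hDH : (Matrix.diagonal fun i => toDQ (d i))ᴴ = Matrix.diagonal fun i => toDQ (d i) := by
    rw [Matrix.diagonal_conjTranspose]
    congr 1
    funext i
    exact star_toDQ (d i)
  have htr : ∀ m, dqRe (Matrix.trace (A ^ m)) =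
      dqRe (Matrix.trace ((Matrix.diagonal fun i => toDQ (d i)) ^ m)) := by
    rintro (_ | m)
    · simp
    · rw [← hD, conj_pow hU, dqRe_trace_mul_comm, ← mul_assoc, hU, one_mul]
  rw [Cdet_eq_wsum hA, wsum_eq_of_trace hA hDH htr, wsum_diagonal, ← mul_assoc, ← mul_pow]
  simp

theorem hasEigenvalues_sq {A : Matrix (Fin n) (Fin n) DualQuaternion}
    {d : Fin n → DualNumber ℝ} (h : HasEigenvalues A d) :
    HasEigenvalues (A * A) fun i => d i ^ 2 := by
  obtain ⟨U, hU, hD⟩ := h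
  refine ⟨U, hU, ?_⟩
  have := conj_pow (A := A) hU 1
  rw [← pow_two, ← this, hD, one_add_one_eq_two, Matrix.diagonal_pow]
  congr 1
  funext i
  simp [← toDQHom_apply]

end Cycles

/-- The Chen determinant of a dual quaternion Hermitian matrix equals the product of its
eigenvalues; moreover `Cdet(A* A) = Cdet(A)² = λ₁² ⋯ λ_n²`. -/
theorem statement12 {n : ℕ} (A : Matrix (Fin n) (Fin n) DualQuaternion) (hA : Aᴴ = A)
    (lam : Fin n → DualNumber ℝ) (hlam : HasEigenvalues A lam) :
    Cdet A = toDQ (∏ i, lam i) ∧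
    Cdet (Aᴴ * A) = Cdet A ^ 2 ∧ Cdet A ^ 2 = toDQ (∏ i, lam i ^ 2) := by
  have h1 := Cdet_of_hasEigenvalues hA hlam
  have hAA : (A * A)ᴴ = A * A := by rw [Matrix.conjTranspose_mul, hA]
  have h2 := Cdet_of_hasEigenvalues hAA (hasEigenvalues_sq hlam)
  have h3 : Cdet A ^ 2 = toDQ (∏ i, lam i ^ 2) := by
    rw [h1, Finset.prod_pow, ← toDQHom_apply, ← toDQHom_apply, map_pow]
  exact ⟨h1, by rw [hA, h2, h3], h3⟩

end DQPaper
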